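/- Let F be a field of characteristic 0 or at least 5, n ≥ 1, β ∈ F with β ∉ {−1, 0, 1}, and let f ∈ F[x_1,…,x_{2n}, y_1,…,y_{2n}] be multilinear and agree with 1/Q on the Boolean cube. Then for all A, B ⊆ [2n] with |A| + |B| = 2n such that there is no σ ∈ {0,1}^n with A = S_σ and B = [2n]∖S_σ, the coefficient in f of the monomial x_A · y_B is 0. (That is, the only degree-2n monomials of f with nonzero coefficients are the monomials x_{S_σ}·y_{[2n]∖S_σ} for σ ∈ {0,1}^n.) -/

import Mathlib

open MvPolynomial

/-- The polynomial `Q̃ := ∏_{i=1}^{n} (x_{2i−1}·y_{2i} − y_{2i−1}·x_{2i})` in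
`F[x_1,…,x_{2n}, y_1,…,y_{2n}]`, with the `x`-variables indexed by `Sum.inl` and the
`y`-variables by `Sum.inr` (0-based indexing). -/
noncomputable def Qtilde (F : Type*) [Field F] (n : ℕ) :
    MvPolynomial (Fin (2 * n) ⊕ Fin (2 * n)) F :=
  ∏ i : Fin n,
    (X (Sum.inl ⟨2 * i.1, by have := i.2; omega⟩) * X (Sum.inr ⟨2 * i.1 + 1, by have := i.2; omega⟩)
      - X (Sum.inr ⟨2 * i.1, by have := i.2; omega⟩) * X (Sum.inl ⟨2 * i.1 + 1, by have := i.2; omega⟩))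

/-- For `i ∈ [n]` and a bit `b`, the element of `[2n]` belonging to the `i`-th pair:
`2i−1` (0-based: `2i`) if `b = false`, and `2i` (0-based: `2i+1`) if `b = true`. -/
def pairIdx (n : ℕ) (i : Fin n) (b : Bool) : Fin (2 * n) :=
  if b then ⟨2 * i.1 + 1, by have := i.2; omega⟩ else ⟨2 * i.1, by have := i.2; omega⟩

/-- The set `S_σ := { 2i−1 : i ∈ [n], σ_i = 0 } ∪ { 2i : i ∈ [n], σ_i = 1 } ⊆ [2n]`. -/
def Ssig (n : ℕ) (σ : Fin n → Bool) : Finset (Fin (2 * n)) :=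
  Finset.image (fun i : Fin n => pairIdx n i (σ i)) Finset.univ

/-- The exponent vector of the multilinear monomial `x_A · y_B` for `A, B ⊆ [2n]`. -/
noncomputable def setMonomial (n : ℕ) (A B : Finset (Fin (2 * n))) :
    (Fin (2 * n) ⊕ Fin (2 * n)) →₀ ℕ :=
  (∑ i ∈ A, Finsupp.single (Sum.inl i) 1) + ∑ i ∈ B, Finsupp.single (Sum.inr i) 1

namespace QAux

/-- exponent of the `t`-th monomial of the `i`-th factor -/
noncomputable def M (n : ℕ) (i : Fin n) : Option Bool → ((Fin (2 * n) ⊕ Fin (2 * n)) →₀ ℕ)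
  | some b => Finsupp.single (Sum.inl (pairIdx n i b)) 1 + Finsupp.single (Sum.inr (pairIdx n i (!b))) 1
  | none => Finsupp.single (Sum.inl (pairIdx n i false)) 1 + Finsupp.single (Sum.inr (pairIdx n i true)) 1
      + (Finsupp.single (Sum.inl (pairIdx n i true)) 1 + Finsupp.single (Sum.inr (pairIdx n i false)) 1)

noncomputable def P (F : Type*) [Field F] (n : ℕ) (w : Option Bool → F) :
    MvPolynomial (Fin (2 * n) ⊕ Fin (2 * n)) F :=
  ∏ i : Fin n, ∑ t : Option Bool, monomial (M n i t) (w t)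

lemma pairIdx_inj {n : ℕ} {i j : Fin n} {b c : Bool} :
    pairIdx n i b = pairIdx n j c ↔ i = j ∧ b = c := by
  cases b <;> cases c <;> simp [pairIdx, Fin.ext_iff] <;> omega

lemma pairIdx_surj {n : ℕ} (k : Fin (2 * n)) : ∃ i b, k = pairIdx n i b := by
  refine ⟨⟨k.1 / 2, by omega⟩, decide (k.1 % 2 = 1), ?_⟩
  by_cases h : k.1 % 2 = 1 <;> simp [pairIdx, Fin.ext_iff, h] <;> omega

lemma supp {F : Type*} [Field F] {n : ℕ} {w : Option Bool → F} {m}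
    (h : coeff m (P F n w) ≠ 0) : ∃ τ : Fin n → Option Bool, m = ∑ i, M n i (τ i) := by
  classical
  unfold P at h
  rw [Finset.prod_univ_sum, coeff_sum] at h
  obtain ⟨τ, -, hτ⟩ := Finset.exists_ne_zero_of_sum_ne_zero h
  refine ⟨τ, ?_⟩
  have hp : ∀ s : Finset (Fin n), ∏ i ∈ s, monomial (M n i (τ i)) (w (τ i)) =
      monomial (∑ i ∈ s, M n i (τ i)) (∏ i ∈ s, w (τ i)) := by
    intro s
    induction s using Finset.induction_on with
    | empty => simp
    | insert a s ha ih => rw [Finset.prod_insert ha, Finset.sum_insert ha, Finset.prod_insert ha, ih, monomial_mul]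
  rw [hp] at hτ
  rw [coeff_monomial] at hτ
  by_contra hc
  exact hτ (if_neg fun h => hc h.symm)

lemma M_le (n : ℕ) (i j : Fin n) (t : Option Bool) (b : Bool) :
    M n i t (Sum.inl (pairIdx n j b)) ≤ (if i = j then 1 else 0) ∧
    M n i t (Sum.inr (pairIdx n j b)) ≤ (if i = j then 1 else 0) := by
  classical
  rcases t with _ | _ | _ <;> cases b <;> by_cases h : i = j <;>
    simp [M, Finsupp.single_apply, pairIdx_inj, h]

lemma sumM_le (n : ℕ) (τ : Fin n → Option Bool) (v) : (∑ i, M n i (τ i)) v ≤ 1 := by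
  classical
  rw [Finsupp.finsetSum_apply]
  rcases v with k | k <;> obtain ⟨j, b, rfl⟩ := pairIdx_surj k
  · calc _ ≤ ∑ i : Fin n, (if i = j then 1 else 0) := Finset.sum_le_sum fun i _ => (M_le n i j (τ i) b).1
      _ ≤ 1 := by simp
  · calc _ ≤ ∑ i : Fin n, (if i = j then 1 else 0) := Finset.sum_le_sum fun i _ => (M_le n i j (τ i) b).2
      _ ≤ 1 := by simp

lemma degP {F : Type*} [Field F] {n : ℕ} (w : Option Bool → F) (v) : (P F n w).degreeOf v ≤ 1 := by
  rw [degreeOf_le_iff]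
  intro m hm
  obtain ⟨τ, rfl⟩ := supp (mem_support_iff.1 hm)
  exact sumM_le n τ v

lemma setMonomial_inj {n : ℕ} {A B A' B' : Finset (Fin (2 * n))}
    (h : setMonomial n A B = setMonomial n A' B') : A = A' ∧ B = B' := by
  classical
  constructor
  · ext j
    have := DFunLike.congr_fun h (Sum.inl j)
    simp [setMonomial, Finsupp.finsetSum_apply, Finsupp.single_apply] at this
    by_cases h1 : j ∈ A <;> by_cases h2 : j ∈ A' <;> simp_all
  · ext j
    have := DFunLike.congr_fun h (Sum.inr j)
    simp [setMonomial, Finsupp.finsetSum_apply, Finsupp.single_apply] at this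
    by_cases h1 : j ∈ B <;> by_cases h2 : j ∈ B' <;> simp_all

lemma Ssig_compl (n : ℕ) (σ : Fin n → Bool) : Ssig n (fun i => !σ i) = (Ssig n σ)ᶜ := by
  ext k
  obtain ⟨j, b, rfl⟩ := pairIdx_surj k
  simp only [Ssig, Finset.mem_image, Finset.mem_univ, true_and, pairIdx_inj, Finset.mem_compl,
    exists_eq_left]
  cases b <;> cases σ j <;> simp

lemma sum_some (n : ℕ) (σ : Fin n → Bool) :
    ∑ i, M n i (some (σ i)) = setMonomial n (Ssig n σ) (Ssig n σ)ᶜ := by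
  rw [← Ssig_compl]
  unfold setMonomial Ssig
  rw [Finset.sum_image, Finset.sum_image, ← Finset.sum_add_distrib]
  · rfl
  · intro i _ j _ h
    exact (pairIdx_inj.1 h).1
  · intro i _ j _ h
    exact (pairIdx_inj.1 h).1

lemma coeffP {F : Type*} [Field F] {n : ℕ} (w : Option Bool → F)
    (A B : Finset (Fin (2 * n))) (hAB : A.card + B.card = 2 * n)
    (hns : ¬ ∃ σ : Fin n → Bool, A = Ssig n σ ∧ B = (Ssig n σ)ᶜ) :
    coeff (setMonomial n A B) (P F n w) = 0 := by
  by_contra hc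
  obtain ⟨τ, hτ⟩ := supp hc
  have hd := congrArg Finsupp.degree hτ
  have h1 : Finsupp.degree (setMonomial n A B) = 2 * n := by
    simp [setMonomial, map_sum, hAB]
  have h2 : ∀ i t, 2 ≤ Finsupp.degree (M n i t) := by
    intro i t
    rcases t with _ | _ <;> simp [M]
  have h3 : ∀ i, Finsupp.degree (M n i (τ i)) = 2 := by
    rw [h1, map_sum] at hd
    have := (Finset.sum_eq_sum_iff_of_le (s := Finset.univ) (f := fun _ : Fin n => 2)
      (fun i _ => h2 i (τ i))).1 (by rw [← hd]; simp [mul_comm])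
    intro i
    exact (this i (Finset.mem_univ i)).symm
  have h4 : ∀ i, ∃ b, τ i = some b := by
    intro i
    have := h3 i
    rcases h : τ i with _ | b
    · rw [h] at this
      simp [M] at this
    · exact ⟨b, rfl⟩
  choose σ hσ using h4
  simp only [hσ] at hτ
  rw [sum_some] at hτ
  exact hns ⟨σ, setMonomial_inj hτ⟩

lemma Q_eq (F : Type*) [Field F] (n : ℕ) :
    Qtilde F n = ∏ i : Fin n, (X (Sum.inl (pairIdx n i false)) * X (Sum.inr (pairIdx n i true))
      - X (Sum.inr (pairIdx n i false)) * X (Sum.inl (pairIdx n i true))) := rfl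

lemma Q_eq_P (F : Type*) [Field F] (n : ℕ) :
    Qtilde F n = P F n (fun t => t.elim 0 (fun b => if b then -1 else 1)) := by
  rw [Q_eq]
  unfold P
  refine Finset.prod_congr rfl fun i _ => ?_
  have hm : ∀ u v : Fin (2 * n) ⊕ Fin (2 * n), ∀ c : F,
      monomial (Finsupp.single u 1 + Finsupp.single v 1) c = C c * (X u * X v) := by
    intro u v c
    simp [X, monomial_mul, C_mul_monomial]
  simp only [Fintype.sum_option, Fintype.sum_bool, M, hm]
  simp
  ring

lemma evalP {F : Type*} [Field F] {n : ℕ} (x : Fin (2 * n) ⊕ Fin (2 * n) → F)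
    (hx : ∀ v, x v = 0 ∨ x v = 1) :
    eval x (P F n (fun t => t.elim (-2) (fun _ => 1))) = eval x (Qtilde F n) ^ 2 := by
  rw [Q_eq]
  unfold P
  rw [map_prod, map_prod, ← Finset.prod_pow]
  refine Finset.prod_congr rfl fun i _ => ?_
  simp [Fintype.sum_option, M, eval_monomial, Finsupp.prod_add_index', pow_add]
  rcases hx (Sum.inl (pairIdx n i false)) with h1 | h1 <;>
  rcases hx (Sum.inl (pairIdx n i true)) with h2 | h2 <;>
  rcases hx (Sum.inr (pairIdx n i false)) with h3 | h3 <;>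
  rcases hx (Sum.inr (pairIdx n i true)) with h4 | h4 <;>
  rw [h1, h2, h3, h4] <;> norm_num

lemma evalQ {F : Type*} [Field F] {n : ℕ} (x : Fin (2 * n) ⊕ Fin (2 * n) → F)
    (hx : ∀ v, x v = 0 ∨ x v = 1) :
    eval x (Qtilde F n) = -1 ∨ eval x (Qtilde F n) = 0 ∨ eval x (Qtilde F n) = 1 := by
  rw [Q_eq, map_prod]
  refine Finset.prod_induction _ (fun z => z = -1 ∨ z = 0 ∨ z = 1) ?_ (by simp) fun i _ => ?_
  · rintro a b (rfl | rfl | rfl) (rfl | rfl | rfl) <;> simp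
  simp only [map_sub, map_mul, eval_X]
  rcases hx (Sum.inl (pairIdx n i false)) with h1 | h1 <;>
  rcases hx (Sum.inl (pairIdx n i true)) with h2 | h2 <;>
  rcases hx (Sum.inr (pairIdx n i false)) with h3 | h3 <;>
  rcases hx (Sum.inr (pairIdx n i true)) with h4 | h4 <;>
  rw [h1, h2, h3, h4] <;> norm_num

end QAux

/-- Let `F` have characteristic `0` or at least `5`, `n ≥ 1`,
`β ∉ {−1,0,1}`, and let `f` be multilinear and agree with `1/Q` on the Boolean cube. Then for
all `A, B ⊆ [2n]` with `|A| + |B| = 2n` that are not of the form `A = S_σ`, `B = [2n]∖S_σ`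
for some `σ ∈ {0,1}^n`, the coefficient in `f` of `x_A · y_B` is `0`. -/
theorem coeff_nonsigma_degree2n_vanishes_of_inverse_of_Q
    (F : Type*) [Field F] (n : ℕ) (hn : 1 ≤ n)
    (hchar : ringChar F = 0 ∨ 5 ≤ ringChar F)
    (β : F) (hβ : β ∉ ({-1, 0, 1} : Set F))
    (f : MvPolynomial (Fin (2 * n) ⊕ Fin (2 * n)) F)
    (hml : ∀ v, f.degreeOf v ≤ 1)
    (hf : ∀ a b : Fin (2 * n) → F, (∀ i, a i = 0 ∨ a i = 1) → (∀ i, b i = 0 ∨ b i = 1) →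
      eval (Sum.elim a b) f * eval (Sum.elim a b) (Qtilde F n - C β) = 1)
    (A B : Finset (Fin (2 * n))) (hAB : A.card + B.card = 2 * n)
    (hns : ¬ ∃ σ : Fin n → Bool, A = Ssig n σ ∧ B = (Ssig n σ)ᶜ) :
    coeff (setMonomial n A B) f = 0 := by
  classical
  have h2 : (2 : F) ≠ 0 := by
    intro h
    have : ringChar F ∣ 2 := (ringChar.spec F 2).1 (by exact_mod_cast h)
    rcases hchar with h0 | h0
    · rw [h0] at this; omega
    · exact absurd (Nat.le_of_dvd (by norm_num) this) (by omega)
  simp only [Set.mem_insert_iff, Set.mem_singleton_iff, not_or] at hβ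
  obtain ⟨hb1, hb0, hb2⟩ := hβ
  have k0 : -β ≠ 0 := neg_ne_zero.2 hb0
  have k1 : 1 - β ≠ 0 := sub_ne_zero.2 (Ne.symm hb2)
  have k2 : -1 - β ≠ 0 := sub_ne_zero.2 (Ne.symm hb1)
  obtain ⟨c0, c1, c2, hc0, hc1, hc2⟩ : ∃ c0 c1 c2 : F, c0 * (-β) = 1 ∧
      (c0 + c1 + c2) * (1 - β) = 1 ∧ (c0 - c1 + c2) * (-1 - β) = 1 := by
    refine ⟨(-β)⁻¹, ((1 - β)⁻¹ - (-1 - β)⁻¹) / 2, ((1 - β)⁻¹ + (-1 - β)⁻¹) / 2 - (-β)⁻¹,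
      inv_mul_cancel₀ k0, ?_, ?_⟩
    · generalize hu : (1 - β)⁻¹ = u
      generalize hv : (-1 - β)⁻¹ = v
      have e : ∀ c : F, c = u → c * (1 - β) = 1 := by
        rintro c rfl
        rw [← hu]; exact inv_mul_cancel₀ k1
      apply e
      field_simp; ring
    · generalize hu : (1 - β)⁻¹ = u
      generalize hv : (-1 - β)⁻¹ = v
      have e : ∀ c : F, c = v → c * (-1 - β) = 1 := by
        rintro c rfl
        rw [← hv]; exact inv_mul_cancel₀ k2
      apply e
      field_simp; ring
  let R := QAux.P F n (fun t => t.elim (-2) (fun _ => 1))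
  let g : MvPolynomial (Fin (2 * n) ⊕ Fin (2 * n)) F := C c0 + C c1 * Qtilde F n + C c2 * R
  have hg : ∀ v, g.degreeOf v ≤ 1 := by
    intro v
    refine (degreeOf_add_le _ _ _).trans (max_le ((degreeOf_add_le _ _ _).trans (max_le ?_ ?_)) ?_)
    · simp
    · refine (degreeOf_C_mul_le _ _ _).trans ?_
      rw [QAux.Q_eq_P]
      exact QAux.degP _ _
    · exact (degreeOf_C_mul_le _ _ _).trans (QAux.degP _ _)
  have hfg : f - g = 0 := by
    refine eq_zero_of_eval_zero_at_prod_finset (f - g) (fun _ => ({0, 1} : Finset F)) ?_ ?_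
    · intro v
      rw [Finset.card_pair zero_ne_one]
      exact Nat.lt_succ_of_le ((degreeOf_sub_le _ _ _).trans (max_le (hml v) (hg v)))
    · intro x hx
      have hx' : ∀ v, x v = 0 ∨ x v = 1 := fun v => by simpa using hx v
      have he := hf (x ∘ Sum.inl) (x ∘ Sum.inr) (fun i => hx' _) (fun i => hx' _)
      rw [Sum.elim_comp_inl_inr] at he
      have hR : eval x R = eval x (Qtilde F n) ^ 2 := QAux.evalP x hx'
      simp only [g, map_sub, map_add, map_mul, eval_C, hR] at he ⊢
      rcases QAux.evalQ x hx' with hz | hz | hz <;> rw [hz] at he ⊢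
      · apply mul_right_cancel₀ k2; linear_combination he - hc2
      · apply mul_right_cancel₀ k0; linear_combination he - hc0
      · apply mul_right_cancel₀ k1; linear_combination he - hc1
  rw [sub_eq_zero.1 hfg]
  have hm : setMonomial n A B ≠ 0 := by
    intro h
    have := congrArg Finsupp.degree h
    simp [setMonomial, map_sum] at this
    simp [this] at hAB
    omega
  simp only [g, coeff_add, coeff_C_mul, coeff_C, if_neg hm.symm]
  rw [QAux.Q_eq_P, QAux.coeffP _ A B hAB hns, QAux.coeffP _ A B hAB hns]
  simp
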